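/- There exists a finite alphabet Σ such that the validity problem for DPLDL formulas over Σ is undecidable: there is no computable function that, given (a natural effective encoding, with states and stack symbols drawn from ℕ, of) a DPLDL formula over Σ, decides whether the formula is valid. -/

import Mathlib

/-!
Validity is undecidable because a formula can force an infinite word to start with the trace of a
halting computation of a machine with several stacks.

The halting problem is the domain of one partial recursive function, so there is a fixed
`ToPartrec.Code` `c` for which halting on `[n]` is undecidable in `n` (`exists_code_universal`).
Mathlib compiles `c` to a TM2 program with four stacks over the alphabet `Γ'`; broken up into single
stack operations it is a multi-stack machine with finitely many control states (`stmtMachine`,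
`reachCtl_finite`, `stmtMachine_startStmt_halts_iff`).

A computation of such a machine is determined by the word recording, for each step, the top symbol
of the stack being accessed. For each stack `k` a single DPDA (`trackDPDA`) reads that word, follows
the control states as dictated by the letters, keeps stack `k` on its own store, and compares the
letter with the top of its store whenever stack `k` is accessed. It accepts on reaching a halting
state. All four DPDAs follow the same sequence of control states, so they accept prefixes of one
infinite word if and only if the machine halts (`exists_trace`, `halts_of_trace`). Therefore the
negation of the conjunction of the four diamonds `⟨A_k⟩⊤` is valid if and only if `c` does not halt
on `[n]` (`valid_haltFormula_iff`).

Only the first transition, which writes the input on the main stack, depends on `n`, so the code of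
the formula is computable in `n` (`computable_haltFormula_code`), and a decision procedure for
validity would solve the halting problem.
-/


/-- A deterministic pushdown automaton with states `Fin n` and stack alphabet `Fin m`
over the alphabet `A`: in each state, for each input letter and each top-of-stack
symbol there is at most one move, which replaces the top symbol by a finite word over
the stack alphabet. The initial stack consists of the bottom marker `z0` only. -/
structure DPDA (A : Type) (n m : ℕ) where
  δ : Fin n → A → Fin m → Option (Fin n × List (Fin m))
  start : Fin n
  z0 : Fin m
  final : Fin n → Bool

/-- One step of a DPDA on a configuration (undefined on the empty stack or when the
transition function gives no move). -/
def DPDA.stepc {A : Type} {n m : ℕ} (M : DPDA A n m) :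
    Fin n × List (Fin m) → A → Option (Fin n × List (Fin m))
  | (_, []), _ => none
  | (q, g :: s), a => (M.δ q a g).map (fun p => (p.1, p.2 ++ s))

/-- The run of a DPDA on a finite word from a configuration. -/
def DPDA.run {A : Type} {n m : ℕ} (M : DPDA A n m) :
    Fin n × List (Fin m) → List A → Option (Fin n × List (Fin m))
  | c, [] => some c
  | c, a :: w => (M.stepc c a).bind (fun c' => M.run c' w)

/-- A DPDA accepts a finite word if its run from the initial configuration exists and
ends in a final state. -/
def DPDA.Accepts {A : Type} {n m : ℕ} (M : DPDA A n m) (w : List A) : Prop :=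
  ∃ c, M.run (M.start, [M.z0]) w = some c ∧ M.final c.1 = true

/-- DPLDL formulas over the alphabet `A`: atoms are letters, and the temporal operators
are guarded by deterministic pushdown automata. -/
inductive DPLDL (A : Type) : Type
  | atom (a : A)
  | neg (φ : DPLDL A)
  | and (φ ψ : DPLDL A)
  | or (φ ψ : DPLDL A)
  | dia (n m : ℕ) (M : DPDA A n m) (φ : DPLDL A)
  | box (n m : ℕ) (M : DPDA A n m) (φ : DPLDL A)

/-- The infix `α_k ⋯ α_{l-1}` of an infinite word. -/
def infixW {A : Type} (α : ℕ → A) (k l : ℕ) : List A :=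
  (List.range (l - k)).map (fun i => α (k + i))

/-- Satisfaction of DPLDL formulas on infinite words over `A`. -/
def DPLDL.sat {A : Type} : DPLDL A → (ℕ → A) → ℕ → Prop
  | .atom a, α, k => α k = a
  | .neg φ, α, k => ¬ DPLDL.sat φ α k
  | .and φ ψ, α, k => DPLDL.sat φ α k ∧ DPLDL.sat ψ α k
  | .or φ ψ, α, k => DPLDL.sat φ α k ∨ DPLDL.sat ψ α k
  | .dia _ _ M φ, α, k => ∃ l, k ≤ l ∧ M.Accepts (infixW α k l) ∧ DPLDL.sat φ α l
  | .box _ _ M φ, α, k => ∀ l, k ≤ l → M.Accepts (infixW α k l) → DPLDL.sat φ α l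

/-- A natural effective encoding of a DPDA (over the alphabet `Fin k`, with states and
stack symbols drawn from `ℕ` via `Fin n` and `Fin m`) as a natural number. -/
def DPDA.code {k n m : ℕ} (M : DPDA (Fin k) n m) : ℕ :=
  Encodable.encode
    (n, m,
      List.ofFn (fun q => List.ofFn (fun a => List.ofFn (fun g => M.δ q a g))),
      M.start.val, M.z0.val,
      List.ofFn (fun q => M.final q))

/-- A natural effective encoding of DPLDL formulas over `Fin k` as natural numbers. -/
def DPLDL.code {k : ℕ} : DPLDL (Fin k) → ℕ
  | .atom a => Nat.pair 0 a.val
  | .neg φ => Nat.pair 1 φ.code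
  | .and φ ψ => Nat.pair 2 (Nat.pair φ.code ψ.code)
  | .or φ ψ => Nat.pair 3 (Nat.pair φ.code ψ.code)
  | .dia _ _ M φ => Nat.pair 4 (Nat.pair M.code φ.code)
  | .box _ _ M φ => Nat.pair 5 (Nat.pair M.code φ.code)


open Turing Turing.PartrecToTM2 Turing.ToPartrec

/-! ### Halting as an inductive predicate -/

/-- The iteration of `f` from `a` reaches a point where `f` is undefined. -/
inductive Halts {C : Type} (f : C → Option C) : C → Prop
  | halted {a : C} : f a = none → Halts f a
  | step {a b : C} : f a = some b → Halts f b → Halts f a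

theorem halts_iff_eval_dom {C : Type} (f : C → Option C) (a : C) :
    Halts f a ↔ (StateTransition.eval f a).Dom := by
  rw [Part.dom_iff_mem]
  simp only [StateTransition.mem_eval]
  constructor
  · intro h
    induction h with
    | halted h => exact ⟨_, Relation.ReflTransGen.refl, h⟩
    | step h _ ih =>
      obtain ⟨y, hy, hy'⟩ := ih
      exact ⟨y, Relation.ReflTransGen.head h hy, hy'⟩
  · rintro ⟨y, hy, hy'⟩
    induction hy using Relation.ReflTransGen.head_induction_on with
    | refl => exact .halted hy'
    | head h _ ih => exact .step h ih

/-! ### Multi-stack machines -/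

/-- A machine with stacks indexed by `K`. A control state either halts (`none`) or selects a
stack `k` together with a function which, from the observed top symbol (`none` if the stack is
empty), gives the next control state and the word replacing that top symbol. -/
abbrev Machine (K Γ Q : Type) := Q → Option (K × (Option Γ → Q × List Γ))

/-- One step of a multi-stack machine. -/
def Machine.step {K Γ Q : Type} [DecidableEq K] (m : Machine K Γ Q)
    (c : Q × (K → List Γ)) : Option (Q × (K → List Γ)) :=
  (m c.1).map fun p =>
    ((p.2 (c.2 p.1).head?).1,
      Function.update c.2 p.1 ((p.2 (c.2 p.1).head?).2 ++ (c.2 p.1).tail))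

/-- The DPDA that follows the control of the machine `m` while storing only stack `k`. Letters
are guesses of the observed top symbols; the guess is checked exactly when the current
instruction acts on stack `k`. The stack symbol `σ none` marks the bottom. -/
def trackDPDA {K Γ Q : Type} [DecidableEq K] {N s : ℕ} (m : Machine K Γ Q) (d : Fin N → Q)
    (e : Q → Fin N) (σ : Option Γ ≃ Fin s) (init : Q) (k : K) : DPDA (Fin s) N s where
  δ i a g := match m (d i) with
    | none => none
    | some (k', f) =>
      if k' = k then
        if a = g then
          some (e (f (σ.symm a)).1,
            (f (σ.symm a)).2.map (fun x => σ (some x)) ++ if g = σ none then [g] else [])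
        else none
      else some (e (f (σ.symm a)).1, [g])
  start := e init
  z0 := σ none
  final i := (m (d i)).isNone

/-- Acceptance of a word from a given configuration. -/
def AcceptsFrom {A : Type} {n m : ℕ} (M : DPDA A n m) (c : Fin n × List (Fin m))
    (w : List A) : Prop :=
  ∃ c', M.run c w = some c' ∧ M.final c'.1 = true

/-- The pushdown store representing the stack `L`. -/
def encStack {Γ : Type} {s : ℕ} (σ : Option Γ ≃ Fin s) (L : List Γ) : List (Fin s) :=
  L.map (fun x => σ (some x)) ++ [σ none]

theorem infixW_self {A : Type} (α : ℕ → A) (t : ℕ) : infixW α t t = [] := by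
  simp [infixW]

theorem infixW_cons {A : Type} (α : ℕ → A) {t l : ℕ} (h : t < l) :
    infixW α t l = α t :: infixW α (t + 1) l := by
  obtain ⟨r, rfl⟩ := Nat.exists_eq_add_of_lt h
  have h1 : t + r + 1 - t = r + 1 := by omega
  have h2 : t + r + 1 - (t + 1) = r := by omega
  simp only [infixW, h1, h2, List.range_succ_eq_map, List.map_cons, List.map_map]
  simp [Function.comp_def, Nat.add_comm, Nat.add_left_comm]

theorem infixW_getD {A : Type} (w : List A) (a : A) :
    infixW (fun i => w.getD i a) 0 w.length = w := by
  apply List.ext_getElem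
  · simp [infixW]
  · intro i h1 h2
    simp [infixW, List.getElem?_eq_getElem h2]

section Track

variable {K Γ Q : Type} [DecidableEq K] {N s : ℕ} (m : Machine K Γ Q) (d : Fin N → Q)
    (e : Q → Fin N) (σ : Option Γ ≃ Fin s) (init : Q)

theorem acceptsFrom_nil {q : Q} (hq : d (e q) = q) (k : K) (st : List (Fin s)) :
    AcceptsFrom (trackDPDA m d e σ init k) (e q, st) [] ↔ m q = none := by
  simp [AcceptsFrom, DPDA.run, trackDPDA, hq]

/-- Reading a letter in a non-halted state: the letter must be the true top symbol if stack `k` is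
accessed, and the configuration then evolves as in the machine that observes this letter. -/
theorem acceptsFrom_cons {q : Q} (hq : d (e q) = q) {k' : K} {f : Option Γ → Q × List Γ}
    (hm : m q = some (k', f)) (k : K) (S : K → List Γ) (a : Fin s) (w : List (Fin s)) :
    AcceptsFrom (trackDPDA m d e σ init k) (e q, encStack σ (S k)) (a :: w) ↔
      (k' = k → σ.symm a = (S k).head?) ∧
      AcceptsFrom (trackDPDA m d e σ init k) (e (f (σ.symm a)).1,
        encStack σ (Function.update S k' ((f (σ.symm a)).2 ++ (S k').tail) k)) w := by
  by_cases hk : k' = k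
  · subst hk
    cases hS : S k' with
    | nil =>
      by_cases ha : a = σ none
      · subst ha
        simp [AcceptsFrom, DPDA.run, DPDA.stepc, trackDPDA, hq, hm, encStack]
      · have : σ.symm a ≠ none := fun h => ha (by rw [← h]; simp)
        simp [AcceptsFrom, DPDA.run, DPDA.stepc, trackDPDA, hq, hm, encStack, ha, this]
    | cons x L =>
      by_cases ha : a = σ (some x)
      · subst ha
        simp [AcceptsFrom, DPDA.run, DPDA.stepc, trackDPDA, hq, hm, encStack]
      · have : σ.symm a ≠ some x := fun h => ha (by rw [← h]; simp)
        simp [AcceptsFrom, DPDA.run, DPDA.stepc, trackDPDA, hq, hm, encStack, ha, this]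
  · have hk' : k ≠ k' := fun h => hk h.symm
    cases hS : S k <;>
      simp [AcceptsFrom, DPDA.run, DPDA.stepc, trackDPDA, hq, hm, encStack, hk, hk', hS]

variable (F : Set Q) (hF : ∀ q ∈ F, ∀ k f, m q = some (k, f) → ∀ o, (f o).1 ∈ F)
  (hde : ∀ q ∈ F, d (e q) = q)

include hF hde

/-- If the machine halts, the sequence of its observations is accepted for every stack. -/
theorem exists_trace {c : Q × (K → List Γ)} (h : Halts m.step c) (hc : c.1 ∈ F) :
    ∃ w, ∀ k, AcceptsFrom (trackDPDA m d e σ init k) (e c.1, encStack σ (c.2 k)) w := by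
  induction h with
  | @halted a h =>
    refine ⟨[], fun k => (acceptsFrom_nil m d e σ init (hde _ hc) k _).2 ?_⟩
    simpa [Machine.step] using h
  | @step a b h _ ih =>
    obtain ⟨⟨k', f⟩, hm, rfl⟩ := Option.map_eq_some_iff.1 h
    obtain ⟨w, hw⟩ := ih (hF _ hc _ _ hm _)
    refine ⟨σ (a.2 k').head? :: w, fun k => ?_⟩
    rw [acceptsFrom_cons m d e σ init (hde _ hc) hm]
    refine ⟨?_, ?_⟩
    · rintro rfl
      simp
    · simpa using hw k

/-- If prefixes of one infinite word are accepted for every stack, the machine halts: each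
observation is checked by the DPDA responsible for its stack, so the run of the machine follows
the word. -/
theorem halts_of_trace [Inhabited K] (α : ℕ → Fin s) (r : ℕ) :
    ∀ (t : ℕ) (c : Q × (K → List Γ)) (l : K → ℕ), c.1 ∈ F → l default = t + r →
      (∀ k, t ≤ l k ∧ AcceptsFrom (trackDPDA m d e σ init k)
        (e c.1, encStack σ (c.2 k)) (infixW α t (l k))) → Halts m.step c := by
  induction r with
  | zero =>
    intro t c l hc hl h
    have h0 := (h default).2
    rw [hl, Nat.add_zero, infixW_self, acceptsFrom_nil m d e σ init (hde _ hc)] at h0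
    exact .halted (by simp [Machine.step, h0])
  | succ r ih =>
    intro t c l hc hl h
    cases hm : m c.1 with
    | none => exact .halted (by simp [Machine.step, hm])
    | some p =>
      obtain ⟨k', f⟩ := p
      have hlt : ∀ k, t < l k := by
        intro k
        rcases (h k).1.lt_or_eq with h' | h'
        · exact h'
        · have h0 := (h k).2
          rw [← h', infixW_self, acceptsFrom_nil m d e σ init (hde _ hc), hm] at h0
          cases h0
      have hstep := fun k => (h k).2
      simp only [fun k => infixW_cons α (hlt k),
        acceptsFrom_cons m d e σ init (hde _ hc) hm] at hstep
      have ho := (hstep k').1 rfl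
      refine .step (b := ((f (c.2 k').head?).1,
        Function.update c.2 k' ((f (c.2 k').head?).2 ++ (c.2 k').tail)))
        (by simp [Machine.step, hm]) ?_
      refine ih (t + 1) _ l (hF _ hc _ _ hm _) (by omega) fun k => ⟨hlt k, ?_⟩
      have := (hstep k).2
      rwa [ho] at this

end Track

/-! ### The stack machine of a partial recursive function -/

/-- Control states: the statement being executed with the value of the local variable, or `none`
before the input has been written. -/
abbrev Ctl := Option (Stmt' × Option Γ')

/-- The multi-stack machine executing the statements of `PartrecToTM2.tr` one stack operation at
a time. It starts by writing `w` on the main stack and then runs `q₀`. Instructions that touch no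
stack are presented as reading the main stack and leaving it unchanged. -/
def stmtMachine (q₀ : Stmt' × Option Γ') (w : List Γ') : Machine K' Γ' Ctl
  | none => some (K'.main, fun o => (some q₀, w ++ o.toList))
  | some (.push k f q, v) => some (k, fun o => (some (q, v), f v :: o.toList))
  | some (.peek k f q, v) => some (k, fun o => (some (q, f v o), o.toList))
  | some (.pop k f q, v) => some (k, fun o => (some (q, f v o), []))
  | some (.load f q, v) => some (K'.main, fun o => (some (q, f v), o.toList))
  | some (.branch f q₁ q₂, v) =>
    some (K'.main, fun o => (some (cond (f v) q₁ q₂, v), o.toList))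
  | some (.goto f, v) => some (K'.main, fun o => (some (tr (f v), v), o.toList))
  | some (.halt, _) => none

theorem head?_toList_append_tail {A : Type} (L : List A) : L.head?.toList ++ L.tail = L := by
  cases L <;> rfl

/-- The stack operations inside one statement do not change the TM2 configuration in which the
statement results, and `goto` is exactly one TM2 step. -/
theorem tm2_halts_of_stmtMachine_halts {q₀ w} {c : Ctl × (K' → List Γ')}
    (h : Halts (stmtMachine q₀ w).step c) :
    ∀ q v, c.1 = some (q, v) → Halts (TM2.step tr) (TM2.stepAux q v c.2) := by
  induction h with
  | @halted a h =>
    obtain ⟨a, S⟩ := a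
    rintro q v rfl
    cases q <;> simp [Machine.step, stmtMachine] at h
    exact .halted rfl
  | @step a b h _ ih =>
    obtain ⟨a, S⟩ := a
    rintro q v rfl
    cases q <;> simp [Machine.step, stmtMachine, head?_toList_append_tail] at h <;> subst h
    case branch f q₁ q₂ _ =>
      have := ih _ _ rfl
      simp only [TM2.stepAux]
      cases hf : f v <;> rw [hf] at this <;> exact this
    case goto f => exact .step rfl (ih _ _ rfl)
    all_goals simpa using ih _ _ rfl

theorem stmtMachine_halts_of_tm2_halts {q₀ w} {c : Cfg'} (h : Halts (TM2.step tr) c) :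
    ∀ (q : Stmt') v S, TM2.stepAux q v S = c →
      Halts (stmtMachine q₀ w).step (some (q, v), S) := by
  -- reduces the claim for arbitrary statements to the configurations reached by `goto`
  have aux : ∀ c : Cfg', (∀ f : Option Γ' → Λ', ∀ v S, c = ⟨some (f v), v, S⟩ →
        Halts (stmtMachine q₀ w).step (some (tr (f v), v), S)) →
      ∀ (q : Stmt') v S, TM2.stepAux q v S = c →
        Halts (stmtMachine q₀ w).step (some (q, v), S) := by
    intro c hc q
    induction q with
    | halt => intro v S _; exact .halted rfl
    | goto f =>
      intro v S h
      refine .step (b := (some (tr (f v), v), S)) ?_ (hc f v S h.symm)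
      simp [Machine.step, stmtMachine, head?_toList_append_tail]
    | branch f q₁ q₂ ih₁ ih₂ =>
      intro v S h
      refine .step (b := (some (cond (f v) q₁ q₂, v), S)) ?_ ?_
      · simp [Machine.step, stmtMachine, head?_toList_append_tail]
      · simp only [TM2.stepAux] at h
        cases hf : f v
        · exact ih₂ v S (by simpa [hf] using h)
        · exact ih₁ v S (by simpa [hf] using h)
    | push k f q ih | peek k f q ih | pop k f q ih | load f q ih =>
      intro v S h
      refine .step rfl (ih _ _ ?_)
      simpa [head?_toList_append_tail] using h
  induction h with
  | halted h =>
    refine aux _ ?_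
    rintro f v S rfl
    cases h
  | step h _ ih =>
    refine aux _ ?_
    rintro f v S rfl
    exact ih _ _ _ (Option.some.inj h)

theorem stmtMachine_halts_iff (q : Stmt') (v : Option Γ') (w : List Γ') :
    Halts (stmtMachine (q, v) w).step (none, fun _ => []) ↔
      Halts (TM2.step tr) (TM2.stepAux q v (K'.elim w [] [] [])) := by
  have h1 : (stmtMachine (q, v) w).step (none, fun _ => []) =
      some (some (q, v), K'.elim w [] [] []) := by
    simp only [Machine.step, stmtMachine, Option.map_some, Option.some.injEq, Prod.mk.injEq,
      true_and]
    funext k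
    cases k <;> simp [Function.update]
  constructor
  · intro h
    cases h with
    | halted h => rw [h1] at h; cases h
    | step h h' =>
      rw [h1] at h
      cases h
      exact tm2_halts_of_stmtMachine_halts h' _ _ rfl
  · intro h
    exact .step h1 (stmtMachine_halts_of_tm2_halts h _ _ _ rfl)

/-- The initial statement of the program evaluating `c`, with the local variable unset. -/
def startStmt (c : Code) : Stmt' × Option Γ' := (tr (trNormal c Cont'.halt), none)

theorem stmtMachine_startStmt_halts_iff (c : Code) (v : List ℕ) :
    Halts (stmtMachine (startStmt c) (trList v)).step (none, fun _ => []) ↔ (c.eval v).Dom := by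
  have h := tr_eval c v
  have h2 : (StateTransition.eval (TM2.step tr) (PartrecToTM2.init c v)).Dom ↔
      (c.eval v).Dom := by
    rw [h]; exact Iff.rfl
  refine (stmtMachine_halts_iff _ _ _).trans (Iff.trans ?_ h2)
  refine Iff.trans ?_ (halts_iff_eval_dom _ _)
  constructor
  · intro h; exact .step rfl h
  · intro h
    cases h with
    | halted h => cases h
    | step h h' => cases h; exact h'

/-- A finite set of control states closed under the steps of the program of `c`: the initial state
and the substatements of the labels supporting `c`, with any value of the local variable. -/
noncomputable def reachCtl (c : Code) : Set Ctl :=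
  {q | ∀ p, q = some p → some p.1 ∈ TM2.stmts tr (codeSupp c Cont'.halt)}

theorem none_mem_stmts {K : Type} {Γ : K → Type} {Λ σ : Type} (M : Λ → TM2.Stmt Γ Λ σ)
    (S : Finset Λ) : none ∈ TM2.stmts M S := by
  simp [TM2.stmts]

theorem some_mem_stmts {K : Type} {Γ : K → Type} {Λ σ : Type} (M : Λ → TM2.Stmt Γ Λ σ)
    {S : Finset Λ} {l : Λ} (hl : l ∈ S) : some (M l) ∈ TM2.stmts M S := by
  simp only [TM2.stmts, Finset.some_mem_insertNone, Finset.mem_biUnion]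
  exact ⟨l, hl, TM2.stmts₁_self⟩

theorem cond_mem_stmts₁ {K : Type} {Γ : K → Type} {Λ σ : Type} (f : σ → Bool)
    (q₁ q₂ : TM2.Stmt Γ Λ σ) (b : Bool) : cond b q₁ q₂ ∈ TM2.stmts₁ (.branch f q₁ q₂) := by
  cases b <;> simp [TM2.stmts₁, TM2.stmts₁_self]

theorem reachCtl_finite (c : Code) : (reachCtl c).Finite := by
  have h : (Option.map Prod.fst '' (reachCtl c) : Set (Option Stmt')).Finite := by
    refine (TM2.stmts tr (codeSupp c Cont'.halt)).finite_toSet.subset ?_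
    rintro _ ⟨q, hq, rfl⟩
    cases q with
    | none => exact none_mem_stmts _ _
    | some p => exact hq p rfl
  have h2 : (Set.univ : Set (Option (Option Γ'))).Finite := Set.finite_univ
  refine Set.Finite.of_finite_image (f := fun q : Ctl => (q.map Prod.fst, q.map Prod.snd))
    ((h.prod h2).subset ?_) ?_
  · rintro _ ⟨q, hq, rfl⟩
    exact ⟨⟨q, hq, rfl⟩, trivial⟩
  · rintro (_ | ⟨a, b⟩) _ (_ | ⟨a', b'⟩) _ h <;> simp_all

theorem startStmt_mem (c : Code) : some (startStmt c) ∈ reachCtl c := by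
  rintro _ ⟨⟩
  exact some_mem_stmts _ (codeSupp_self c _ (trStmts₁_self _))

theorem reachCtl_closed (c : Code) (w : List Γ') :
    ∀ q ∈ reachCtl c, ∀ k f, stmtMachine (startStmt c) w q = some (k, f) →
      ∀ o, (f o).1 ∈ reachCtl c := by
  let _ : Inhabited Λ' := ⟨trNormal c Cont'.halt⟩
  have hs : TM2.Supports tr (codeSupp c Cont'.halt) := tr_supports c Cont'.halt
  rintro (_ | ⟨q, v⟩) hq k f h o
  · simp only [stmtMachine, Option.some.injEq, Prod.mk.injEq] at h
    obtain ⟨rfl, rfl⟩ := h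
    exact startStmt_mem c
  · have hq' := hq _ rfl
    have sub : ∀ q', q' ∈ TM2.stmts₁ q → ∀ v', (some (q', v') : Ctl) ∈ reachCtl c := by
      rintro q' hq1 v' _ ⟨⟩
      exact TM2.stmts_trans hq1 hq'
    cases q <;> simp only [stmtMachine, Option.some.injEq, Prod.mk.injEq, reduceCtorEq] at h <;>
      obtain ⟨rfl, rfl⟩ := h
    case goto g =>
      rintro _ ⟨⟩
      exact some_mem_stmts _ (TM2.stmts_supportsStmt hs hq' v)
    case branch g q₁ q₂ =>
      exact sub _ (cond_mem_stmts₁ _ _ _ _) _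
    all_goals exact sub _ (by simp [TM2.stmts₁, TM2.stmts₁_self]) _

/-- A finite set can be numbered by some `Fin N`; the junk value outside `F` needs one more
number, which also covers empty `F`. -/
theorem exists_numbering {Q : Type} [Nonempty Q] (F : Set Q) (hF : F.Finite) :
    ∃ (N : ℕ) (d : Fin N → Q) (e : Q → Fin N), ∀ q ∈ F, d (e q) = q := by
  classical
  have := hF.to_subtype
  obtain ⟨n, ⟨E⟩⟩ := Finite.exists_equiv_fin F
  refine ⟨n + 1, Fin.snoc (fun i => (E.symm i : Q)) (Classical.arbitrary Q),
    fun q => if h : q ∈ F then (E ⟨q, h⟩).castSucc else Fin.last n, fun q hq => ?_⟩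
  simp [hq]

/-! ### The formula -/

section Formula

variable (c : Code) {N s : ℕ} (d : Fin N → Ctl) (e : Ctl → Fin N) (σ : Option Γ' ≃ Fin s)

/-- The DPDA checking stack `k` in the computation of `c` on input `n`. -/
def haltDPDA (n : ℕ) (k : K') : DPDA (Fin s) N s :=
  trackDPDA (stmtMachine (startStmt c) (trList [n])) d e σ none k

/-- A tautology. -/
def topFormula : DPLDL (Fin s) := .or (.atom (σ none)) (.neg (.atom (σ none)))

/-- The formula stating that no infinite word starts with a halting computation of `c` on `n`. -/
def haltFormula (n : ℕ) : DPLDL (Fin s) :=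
  .neg (.and
    (.and (.dia N s (haltDPDA c d e σ n K'.main) (topFormula σ))
      (.dia N s (haltDPDA c d e σ n K'.rev) (topFormula σ)))
    (.and (.dia N s (haltDPDA c d e σ n K'.aux) (topFormula σ))
      (.dia N s (haltDPDA c d e σ n K'.stack) (topFormula σ))))

theorem sat_haltFormula (n : ℕ) (α : ℕ → Fin s) :
    (haltFormula c d e σ n).sat α 0 ↔
      ¬ ∀ k, ∃ l, (haltDPDA c d e σ n k).Accepts (infixW α 0 l) := by
  have htop : ∀ l, (topFormula σ).sat α l := fun l => em _
  simp only [haltFormula, DPLDL.sat, htop, Nat.zero_le, true_and, and_true]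
  refine not_congr ⟨?_, fun h => ⟨⟨h _, h _⟩, h _, h _⟩⟩
  rintro ⟨⟨h1, h2⟩, h3, h4⟩ (_ | _ | _ | _)
  exacts [h1, h2, h3, h4]

theorem valid_haltFormula_iff (hde : ∀ q ∈ reachCtl c, d (e q) = q) (n : ℕ) :
    (∀ α, (haltFormula c d e σ n).sat α 0) ↔ ¬ (c.eval [n]).Dom := by
  rw [← stmtMachine_startStmt_halts_iff]
  simp only [sat_haltFormula, ← not_exists]
  refine not_congr ⟨?_, ?_⟩
  · rintro ⟨α, h⟩
    choose l hl using h
    let _ : Inhabited K' := ⟨K'.main⟩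
    refine halts_of_trace _ d e σ none (reachCtl c) (reachCtl_closed c _) hde α (l default) 0 _ l
      ?_ (Nat.zero_add _).symm fun k => ⟨Nat.zero_le _, hl k⟩
    rintro _ ⟨⟩
  · intro h
    obtain ⟨w, hw⟩ := exists_trace _ d e σ none (reachCtl c) (reachCtl_closed c _) hde h
      (by rintro _ ⟨⟩)
    exact ⟨fun i => w.getD i (σ none), fun k => ⟨w.length, by rw [infixW_getD]; exact hw k⟩⟩

/-! ### Computability of the formula -/

/-- Recursion for the binary digits, least significant first. -/
theorem trNat_eq (n : ℕ) : trNat n = if n = 0 then [] else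
    (if n % 2 = 0 then Γ'.bit0 else Γ'.bit1) :: trNat (n / 2) := by
  split_ifs with h0 h
  · rw [h0, trNat_zero]
  · have h1 : n = 2 * (n / 2) := by omega
    have h2 : (n : Num) = ((n / 2 : ℕ) : Num).bit0 := by
      conv_lhs => rw [h1]
      rw [← Num.bit0_of_bit0]; push_cast; ring
    have h3 : ((n / 2 : ℕ) : Num) ≠ 0 := by
      rw [Ne, Nat.cast_eq_zero]; omega
    rw [trNat, h2, trNat]
    cases hx : ((n / 2 : ℕ) : Num) with
    | zero => exact absurd hx h3
    | pos p => rfl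
  · have h1 : n = 2 * (n / 2) + 1 := by omega
    have h2 : (n : Num) = ((n / 2 : ℕ) : Num).bit1 := by
      conv_lhs => rw [h1]
      rw [← Num.bit1_of_bit1]; push_cast; ring
    rw [trNat, h2, trNat]
    cases hx : ((n / 2 : ℕ) : Num) <;> rfl

theorem computable_trNat_map {A : Type} [Primcodable A] (h : Γ' → A) :
    Computable fun n => (trNat n).map h := by
  have key : Computable₂ fun (_ : Unit) (n : ℕ) => (trNat n).map h := by
    refine Computable.nat_strong_rec _ (g := fun (_ : Unit) (l : List (List A)) =>
      if l.length = 0 then some [] else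
        (l[l.length / 2]?).map fun x =>
          (if l.length % 2 = 0 then h Γ'.bit0 else h Γ'.bit1) :: x) ?_ ?_
    · refine Primrec₂.to_comp ?_
      have hl : Primrec fun p : Unit × List (List A) => p.2.length :=
        Primrec.list_length.comp Primrec.snd
      refine Primrec.ite (Primrec.eq.comp hl (Primrec.const 0)) (Primrec.const _) ?_
      refine Primrec.option_map (Primrec.list_getElem?.comp Primrec.snd
        (Primrec.nat_div.comp hl (Primrec.const 2))) ?_
      refine Primrec.list_cons.comp (Primrec.ite (Primrec.eq.comp
        (Primrec.nat_mod.comp (hl.comp Primrec.fst) (Primrec.const 2)) (Primrec.const 0))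
        (Primrec.const _) (Primrec.const _)) Primrec.snd
    · intro _ n
      by_cases hn : n = 0
      · simp [hn]
      · have : n / 2 < n := by omega
        rw [trNat_eq n]
        simp only [List.length_map, List.length_range, hn, if_false, List.getElem?_map,
          List.getElem?_range this, Option.map_some, List.map_cons]
        split_ifs <;> rfl
  exact key.comp (Computable.const ()) Computable.id

theorem computable_haltDPDA_code (k : K') :
    Computable fun n => (haltDPDA c d e σ n k).code := by
  have hδ : ∀ i a g, Computable fun n => (haltDPDA c d e σ n k).δ i a g := by
    intro i a g
    rcases hd : d i with _ | q
    · have hw : Computable fun n => (trList [n]).map (fun x => σ (some x)) :=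
        (Computable.list_append.comp (computable_trNat_map fun x => σ (some x))
          (Computable.const [σ (some Γ'.cons)])).of_eq fun n => by simp
      by_cases hk : K'.main = k
      · by_cases ha : a = g
        · refine (Computable.option_some.comp ((Computable.const (e (some (startStmt c)))).pair
            (Computable.list_append.comp hw (Computable.const
              ((σ.symm a).toList.map (fun x => σ (some x)) ++
                if g = σ none then [g] else []))))).of_eq fun n => ?_
          simp [haltDPDA, trackDPDA, hd, stmtMachine, hk, ha]
        · refine (Computable.const none).of_eq fun n => ?_
          simp [haltDPDA, trackDPDA, hd, stmtMachine, hk, ha]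
      · refine (Computable.const (some (e (some (startStmt c)), [g]))).of_eq fun n => ?_
        simp [haltDPDA, trackDPDA, hd, stmtMachine, hk]
    · refine (Computable.const ((haltDPDA c d e σ 0 k).δ i a g)).of_eq fun n => ?_
      obtain ⟨q, v⟩ := q
      cases q <;> simp [haltDPDA, trackDPDA, hd, stmtMachine]
  have hfin : ∀ i, Computable fun n => (haltDPDA c d e σ n k).final i := by
    intro i
    refine (Computable.const ((haltDPDA c d e σ 0 k).final i)).of_eq fun n => ?_
    rcases hd : d i with _ | ⟨q, v⟩
    · simp [haltDPDA, trackDPDA, hd, stmtMachine]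
    · cases q <;> simp [haltDPDA, trackDPDA, hd, stmtMachine]
  exact Computable.encode.comp ((Computable.const N).pair ((Computable.const s).pair
    ((Computable.list_ofFn fun i => Computable.list_ofFn fun a => Computable.list_ofFn fun g =>
      hδ i a g).pair ((Computable.const (e none).val).pair ((Computable.const (σ none).val).pair
        (Computable.list_ofFn fun i => hfin i))))))

theorem computable_haltFormula_code : Computable fun n => (haltFormula c d e σ n).code := by
  have hp : ∀ {f g : ℕ → ℕ}, Computable f → Computable g →
      Computable fun n => Nat.pair (f n) (g n) := fun hf hg => Primrec₂.natPair.to_comp.comp hf hg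
  have hd := fun k => hp (Computable.const 4) (hp (computable_haltDPDA_code c d e σ k)
    (Computable.const (topFormula σ).code))
  exact hp (Computable.const 1) (hp (Computable.const 2)
    (hp (hp (Computable.const 2) (hp (hd _) (hd _))) (hp (Computable.const 2) (hp (hd _) (hd _)))))

end Formula

/-! ### The halting problem as the domain of one program -/

/-- A single program whose domain on one-element inputs is the halting problem. -/
theorem exists_code_universal : ∃ c : Code, ∀ n : ℕ,
    (c.eval [n]).Dom ↔ (Nat.Partrec.Code.eval (Denumerable.ofNat Nat.Partrec.Code n) 0).Dom := by
  have h : Partrec fun n : ℕ => Nat.Partrec.Code.eval (Denumerable.ofNat Nat.Partrec.Code n) 0 :=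
    Nat.Partrec.Code.eval_part.comp (Computable.ofNat _) (Computable.const 0)
  obtain ⟨c, hc⟩ := Code.exists_code (Nat.Partrec'.part_iff₁.2 h)
  refine ⟨c, fun n => ?_⟩
  have := hc ⟨[n], rfl⟩
  rw [show c.eval [n] = _ from this]
  exact Iff.rfl

/-- There is a finite alphabet over which the validity problem for
DPLDL is undecidable: no computable function decides, given the encoding of a DPLDL
formula, whether every infinite word is a model of the formula. -/
theorem dpldl_validity_undecidable :
    ∃ k : ℕ, ¬ ∃ f : ℕ → Bool, Computable f ∧
      ∀ φ : DPLDL (Fin k),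
        (f φ.code = true ↔ ∀ α : ℕ → Fin k, DPLDL.sat φ α 0) := by
  obtain ⟨c, hc⟩ := exists_code_universal
  obtain ⟨N, d, e, hde⟩ := exists_numbering _ (reachCtl_finite c)
  obtain ⟨s, ⟨σ⟩⟩ := Finite.exists_equiv_fin (Option Γ')
  refine ⟨s, ?_⟩
  rintro ⟨f, hf, hφ⟩
  refine ComputablePred.halting_problem 0 (ComputablePred.computable_iff.2
    ⟨fun a => !(f (haltFormula c d e σ (Encodable.encode a)).code), ?_, ?_⟩)
  · exact Primrec.not.to_comp.comp
      (hf.comp ((computable_haltFormula_code c d e σ).comp Computable.encode))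
  · funext a
    have h1 := hφ (haltFormula c d e σ (Encodable.encode a))
    have h2 := valid_haltFormula_iff c d e σ hde (Encodable.encode a)
    have h3 := hc (Encodable.encode a)
    rw [Denumerable.ofNat_encode] at h3
    rw [h2, h3] at h1
    cases hb : f (haltFormula c d e σ (Encodable.encode a)).code <;> simp_all
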